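/- arXiv:2404.02493 — 2 statements merged into one kernel-verified Lean document; each statement's English description precedes it below -/
import Mathlib

section
/- Assume 0 < k²h² < 2 and define the smoothing factor g(ω) = sup over θ ∈ [π/2, π] of |1 − ω·(1 − 2cos(θ)/(2 − k²h²))|. Then the choice ω₀ = (2 − k²h²)/(3 − k²h²) minimizes g over all real ω, and the minimum value is g(ω₀) = 1/(3 − k²h²); that is, g(ω₀) = 1/(3 − k²h²) ≤ g(ω) for every ω ∈ ℝ. -/
open Real

/-- The smoothing factor of the damped Jacobi method for the 1D Helmholtz FD
discretization: `g(ω) = sup_{θ ∈ [π/2, π]} |1 - ω·(1 - 2cos(θ)/(2 - k²h²))|`. -/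
noncomputable def smoothingFactor (k h ω : ℝ) : ℝ :=
  sSup ((fun θ => |1 - ω * (1 - 2 * Real.cos θ / (2 - k ^ 2 * h ^ 2))|) ''
    Set.Icc (π / 2) π)

theorem sf_lower (k h ω θ : ℝ) (hθ : θ ∈ Set.Icc (π / 2) π) :
    |1 - ω * (1 - 2 * Real.cos θ / (2 - k ^ 2 * h ^ 2))| ≤ smoothingFactor k h ω := by
  unfold smoothingFactor
  apply le_csSup
  · apply IsCompact.bddAbove
    apply isCompact_Icc.image
    fun_prop
  · exact ⟨θ, hθ, rfl⟩

theorem sf_ge (k h : ℝ) (hkh2 : k ^ 2 * h ^ 2 < 2) (ω : ℝ) :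
    1 / (3 - k ^ 2 * h ^ 2) ≤ smoothingFactor k h ω := by
  have hpi := Real.pi_pos
  have h1 := sf_lower k h ω (π / 2) ⟨le_refl _, by linarith⟩
  have h2 := sf_lower k h ω π ⟨by linarith, le_refl _⟩
  rw [Real.cos_pi_div_two] at h1
  rw [Real.cos_pi] at h2
  generalize smoothingFactor k h ω = g at *
  obtain ⟨s, hs⟩ : ∃ s, s = 2 - k ^ 2 * h ^ 2 := ⟨_, rfl⟩
  have e3 : 3 - k ^ 2 * h ^ 2 = s + 1 := by linarith
  have hs0 : 0 < s := by linarith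
  rw [e3]
  rw [← hs] at h1 h2
  have h1' := (le_abs_self _).trans h1
  have h2' := (neg_le_abs _).trans h2
  have e : -(1 - ω * (1 - 2 * (-1) / s)) = (ω * (s + 2) - s) / s := by
    field_simp
    ring
  rw [e, div_le_iff₀ hs0] at h2'
  simp only [mul_zero, zero_div, sub_zero, mul_one] at h1'
  rw [div_le_iff₀ (by linarith)]
  nlinarith

/-- Assume `0 < k²h² < 2`.  Then `ω₀ = (2 - k²h²)/(3 - k²h²)` minimizes the smoothing
factor `g` over all real `ω`, and the minimum value is `g(ω₀) = 1/(3 - k²h²)`. -/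
theorem stmt5 (k h : ℝ) (hkh : 0 < k ^ 2 * h ^ 2) (hkh2 : k ^ 2 * h ^ 2 < 2) :
    smoothingFactor k h ((2 - k ^ 2 * h ^ 2) / (3 - k ^ 2 * h ^ 2)) =
        1 / (3 - k ^ 2 * h ^ 2) ∧
      ∀ ω : ℝ,
        smoothingFactor k h ((2 - k ^ 2 * h ^ 2) / (3 - k ^ 2 * h ^ 2)) ≤
          smoothingFactor k h ω := by
  have key : smoothingFactor k h ((2 - k ^ 2 * h ^ 2) / (3 - k ^ 2 * h ^ 2)) =
      1 / (3 - k ^ 2 * h ^ 2) := by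
    apply le_antisymm _ (sf_ge k h hkh2 _)
    have hpi := Real.pi_pos
    unfold smoothingFactor
    apply csSup_le
    · exact ⟨_, π, ⟨by linarith, le_refl _⟩, rfl⟩
    · rintro _ ⟨θ, ⟨ha, hb⟩, rfl⟩
      have hc : Real.cos θ ≤ 0 :=
        Real.cos_nonpos_of_pi_div_two_le_of_le ha (by linarith)
      have hc' := Real.neg_one_le_cos θ
      have p2 : 0 < 2 - k ^ 2 * h ^ 2 := by linarith
      have p3 : 0 < 3 - k ^ 2 * h ^ 2 := by linarith
      have e : 1 - (2 - k ^ 2 * h ^ 2) / (3 - k ^ 2 * h ^ 2) *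
          (1 - 2 * Real.cos θ / (2 - k ^ 2 * h ^ 2)) =
          (1 + 2 * Real.cos θ) / (3 - k ^ 2 * h ^ 2) := by
        field_simp
        ring
      show |_| ≤ _
      rw [e, abs_div, abs_of_pos p3]
      apply div_le_div_of_nonneg_right _ p3.le
      rw [abs_le]
      constructor <;> linarith
  refine ⟨key, fun ω => ?_⟩
  rw [key]
  exact sf_ge k h hkh2 ω
end

section
/- Assume k²h² > 2 and that all eigenvalues of A are negative, i.e., (4/h²)·sin²(Nπh/2) < k² (so A is negative definite). Then all eigenvalues μ_j = 1 − ω·(1 − 2cos(jπh)/(2 − k²h²)) of the damped Jacobi error-propagation matrix S_ω = I − ω D⁻¹ A satisfy |μ_j| < 1 for every j = 1, …, N if and only if 0 < ω < ω₁, where ω₁ = (2 − k²h²)/(2sin²(πh/2) − k²h²/2). -/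
open Real

/-- Mesh size `h = 1/(N+1)`. -/
noncomputable def meshH (N : ℕ) : ℝ := 1 / (N + 1)

/-- The damped Jacobi eigenvalue `μ_j = 1 - ω·(1 - 2cos(jπh)/(2 - k²h²))` of the
error-propagation matrix `S_ω = I - ω D⁻¹ A`. -/
noncomputable def jacobiEig (N : ℕ) (k ω : ℝ) (j : ℕ) : ℝ :=
  1 - ω * (1 - 2 * Real.cos (j * π * meshH N) / (2 - k ^ 2 * (meshH N) ^ 2))


theorem jacobi_key (m c w : ℝ) (hm : 0 < m) (hc : 0 < m + 2 * c) :
    |1 - w * (1 - 2 * c / (-m))| < 1 ↔ 0 < w ∧ w * (m + 2 * c) < 2 * m := by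
  have e : 1 - w * (1 - 2 * c / (-m)) = 1 - w * (m + 2 * c) / m := by
    field_simp
    ring
  rw [e, abs_lt]
  constructor
  · rintro ⟨h1, h2⟩
    have h3 : 0 < w * (m + 2 * c) / m := by linarith
    have h4 : w * (m + 2 * c) / m < 2 := by linarith
    rw [div_lt_iff₀ hm] at h4
    refine ⟨?_, h4⟩
    have h5 : 0 < w * (m + 2 * c) := by
      have := mul_pos h3 hm
      rwa [div_mul_cancel₀ _ hm.ne'] at this
    exact pos_of_mul_pos_left h5 hc.le
  · rintro ⟨h1, h2⟩
    have h3 : 0 < w * (m + 2 * c) / m := by positivity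
    have h4 : w * (m + 2 * c) / m < 2 := by rwa [div_lt_iff₀ hm]
    constructor <;> linarith

theorem stmt6 (N : ℕ) (hN : 0 < N) (k : ℝ) (hk : 0 < k)
    (hkh : 2 < k ^ 2 * (meshH N) ^ 2)
    (hneg : 4 / (meshH N) ^ 2 * Real.sin (N * π * meshH N / 2) ^ 2 < k ^ 2) (ω : ℝ) :
    (∀ j : Fin N, |jacobiEig N k ω (j.1 + 1)| < 1) ↔
      (0 < ω ∧
        ω < (2 - k ^ 2 * (meshH N) ^ 2) /
          (2 * Real.sin (π * meshH N / 2) ^ 2 - k ^ 2 * (meshH N) ^ 2 / 2)) := by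
  have hh : 0 < meshH N := by unfold meshH; positivity
  have hNh : ((N : ℝ) + 1) * meshH N = 1 := by unfold meshH; field_simp
  have hpi := Real.pi_pos
  have half : ∀ x : ℝ, Real.sin (x / 2) ^ 2 = (1 - Real.cos x) / 2 := by
    intro x
    rw [Real.sin_sq_eq_half_sub]
    rw [show 2 * (x / 2) = x by ring]
    ring
  rw [half] at hneg ⊢
  obtain ⟨m, hm⟩ : ∃ m, m = k ^ 2 * (meshH N) ^ 2 - 2 := ⟨_, rfl⟩
  have hm0 : 0 < m := by linarith
  have hcN : 0 < m + 2 * Real.cos (N * π * meshH N) := by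
    rw [div_mul_eq_mul_div, div_lt_iff₀ (by positivity)] at hneg
    linarith
  have mono : ∀ a b : ℝ, 0 ≤ a → a ≤ b → b ≤ N →
      Real.cos (b * π * meshH N) ≤ Real.cos (a * π * meshH N) := by
    intro a b ha hab hb
    apply Real.cos_le_cos_of_nonneg_of_le_pi
    · positivity
    · have : b * meshH N ≤ 1 := by nlinarith
      nlinarith
    · gcongr
  have hN1 : (1 : ℝ) ≤ N := by exact_mod_cast hN
  have hc1 : 0 < m + 2 * Real.cos (π * meshH N) := by
    have := mono 1 N (by norm_num) hN1 le_rfl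
    rw [one_mul] at this
    linarith
  have hj : ∀ j : Fin N, |jacobiEig N k ω (j.1 + 1)| < 1 ↔
      0 < ω ∧ ω * (m + 2 * Real.cos (((j.1 + 1 : ℕ) : ℝ) * π * meshH N)) < 2 * m := by
    intro j
    unfold jacobiEig
    rw [show 2 - k ^ 2 * meshH N ^ 2 = -m by linarith]
    apply jacobi_key _ _ _ hm0
    have := mono ((j.1 + 1 : ℕ) : ℝ) N (by positivity) (by exact_mod_cast j.2) le_rfl
    linarith
  have hr : (2 - k ^ 2 * (meshH N) ^ 2) /
      (2 * ((1 - Real.cos (π * meshH N)) / 2) - k ^ 2 * (meshH N) ^ 2 / 2)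
      = 2 * m / (m + 2 * Real.cos (π * meshH N)) := by
    rw [show 2 - k ^ 2 * meshH N ^ 2 = -m by linarith,
      show 2 * ((1 - Real.cos (π * meshH N)) / 2) - k ^ 2 * (meshH N) ^ 2 / 2
        = -((m + 2 * Real.cos (π * meshH N)) / 2) by rw [hm]; ring, neg_div_neg_eq]
    field_simp
  rw [hr, lt_div_iff₀ hc1]
  simp only [hj]
  constructor
  · intro H
    simpa using H ⟨0, hN⟩
  · rintro ⟨h0, h1⟩ j
    refine ⟨h0, lt_of_le_of_lt ?_ h1⟩
    have h2 := mono 1 ((j.1 + 1 : ℕ) : ℝ) (by norm_num) (by push_cast; linarith [Nat.cast_nonneg (α := ℝ) j.1])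
      (by exact_mod_cast j.2)
    rw [one_mul] at h2
    gcongr
end
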